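/- Suppose Fix(P_S ∘ T) ≠ ∅. Then for every x ∈ Fix(P_S ∘ T) and every y ∈ S, ‖P_S(T y) − x‖² ≤ ‖y − x‖² − (‖T y − y‖² − ‖T x − x‖²). In particular, P_S ∘ T restricted to S is strictly quasinonexpansive: ‖P_S(T y) − x‖ < ‖y − x‖ whenever y ∈ S \ Fix(P_S ∘ T) and x ∈ Fix(P_S ∘ T), and for every y₀ ∈ S the sequence defined by y_{n+1} = P_S(T y_n) is Fejér monotone with respect to Fix(P_S ∘ T). -/

import Mathlib

/-!
Write `r(z) = ‖z - T z‖`. Shrinking `u` towards `0` decreases `κ u`, so the minimizer `T z` satisfies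
`κ (T z) ≤ r(z)` (`gauge_prox_le`); hence `r(z)` is the optimal value, and `T z` is the projection
of `z` onto the convex sublevel set `{κ ≤ r(z)}`. This gives the obtuse angle inequality
`⟪z - T z, u - T z⟫ ≤ 0` for every `u` with `κ u ≤ r(z)` (`inner_prox_nonpos`).

Let `x` be a fixed point of `P_S ∘ T`. Then `x - T x` is vertical, and the obtuse angle inequality at
`x` says that `{κ ≤ r(x)}` lies below the height of `T x` as soon as `r(x) > 0`. Consequently no
`y ∈ S` satisfies `r(y) < r(x)`, and `r(y) = r(x)` forces `y` to be a fixed point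
(`residual_eq_and_fixed`). As `κ (T x) ≤ r(x) ≤ r(y)`, the obtuse angle inequality at `y` applies with
`u = T x`; since `T x` lies vertically above or below `x`, Pythagoras turns it into the
quasi-Fejér estimate. Strictness comes from the equality case of `r(x) ≤ r(y)`.
-/

open scoped ENNReal RealInnerProductSpace Pointwise Topology
open Filter

noncomputable section

variable {X : Type*} [NormedAddCommGroup X] [InnerProductSpace ℝ X] [FiniteDimensional ℝ X]

/-- The point `(x, t)` of the lifted space `E = X ×₂ ℝ` (Euclidean product). -/
def pt (x : X) (t : ℝ) : WithLp 2 (X × ℝ) := (WithLp.equiv 2 (X × ℝ)).symm (x, t)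

/-- First (`X`-) coordinate of a point of the lifted space. -/
def fstE (z : WithLp 2 (X × ℝ)) : X := (WithLp.equiv 2 (X × ℝ) z).1

/-- Second (`ℝ`-) coordinate of a point of the lifted space. -/
def sndE (z : WithLp 2 (X × ℝ)) : ℝ := (WithLp.equiv 2 (X × ℝ) z).2

/-- Orthogonal projection `P_S` onto the affine subspace `S = X × {1}`. -/
def PS (z : WithLp 2 (X × ℝ)) : WithLp 2 (X × ℝ) := pt (fstE z) 1

/-- A closed gauge: a convex, lower semicontinuous, positively homogeneous
function `κ : E → [0,∞]` on the lifted space. -/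
def IsClosedGauge (κ : WithLp 2 (X × ℝ) → ℝ≥0∞) : Prop :=
  LowerSemicontinuous κ ∧
  (∀ z w : WithLp 2 (X × ℝ), ∀ a b : ℝ, 0 ≤ a → 0 ≤ b → a + b = 1 →
    κ (a • z + b • w) ≤ ENNReal.ofReal a * κ z + ENNReal.ofReal b * κ w) ∧
  (∀ t : ℝ, 0 ≤ t → ∀ z, κ (t • z) = ENNReal.ofReal t * κ z)

/-- The objective `u ↦ max {κ(u), ‖z − u‖}` defining the polar proximal map. -/
def polarObj (κ : WithLp 2 (X × ℝ) → ℝ≥0∞) (z u : WithLp 2 (X × ℝ)) : ℝ≥0∞ :=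
  max (κ u) (ENNReal.ofReal ‖z - u‖)

/-- `T` is the polar proximal map of `κ`: for every `z`, `T z` is the unique
minimizer of `u ↦ max {κ(u), ‖z − u‖}`. -/
def IsPolarProx (κ : WithLp 2 (X × ℝ) → ℝ≥0∞)
    (T : WithLp 2 (X × ℝ) → WithLp 2 (X × ℝ)) : Prop :=
  ∀ z, (∀ u, polarObj κ z (T z) ≤ polarObj κ z u) ∧
    (∀ u, (∀ v, polarObj κ z u ≤ polarObj κ z v) → u = T z)

set_option linter.unusedSectionVars false

/-- Pythagoras in the lifted space. -/
lemma norm_sq_eq_fstE_sndE (z : WithLp 2 (X × ℝ)) :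
    ‖z‖ ^ 2 = ‖fstE z‖ ^ 2 + (sndE z) ^ 2 := by
  have h := WithLp.prod_norm_sq_eq_of_L2 z
  rw [Real.norm_eq_abs, sq_abs] at h
  exact h

lemma inner_eq_fstE_sndE (z w : WithLp 2 (X × ℝ)) :
    ⟪z, w⟫ = ⟪fstE z, fstE w⟫ + sndE z * sndE w := by
  rw [WithLp.prod_inner_apply, mul_comm]
  rfl

lemma fstE_sub (z w : WithLp 2 (X × ℝ)) : fstE (z - w) = fstE z - fstE w := rfl

lemma sndE_sub (z w : WithLp 2 (X × ℝ)) : sndE (z - w) = sndE z - sndE w := rfl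

lemma fstE_PS (z : WithLp 2 (X × ℝ)) : fstE (PS z) = fstE z := rfl

lemma sndE_PS (z : WithLp 2 (X × ℝ)) : sndE (PS z) = 1 := rfl

lemma eq_of_fstE_sndE {z w : WithLp 2 (X × ℝ)} (h1 : fstE z = fstE w) (h2 : sndE z = sndE w) :
    z = w :=
  (WithLp.equiv 2 (X × ℝ)).injective (Prod.ext h1 h2)

lemma IsClosedGauge.map_zero {κ : WithLp 2 (X × ℝ) → ℝ≥0∞} (hκ : IsClosedGauge κ) : κ 0 = 0 := by
  simpa using hκ.2.2 0 le_rfl 0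

/-- At the polar proximal point the gauge is dominated by the distance: otherwise a slight
contraction of `T z` towards the origin would lower the objective. -/
lemma gauge_prox_le {κ : WithLp 2 (X × ℝ) → ℝ≥0∞} (hκ : IsClosedGauge κ)
    {T : WithLp 2 (X × ℝ) → WithLp 2 (X × ℝ)} (hT : IsPolarProx κ T) (z : WithLp 2 (X × ℝ)) :
    κ (T z) ≤ ENNReal.ofReal ‖z - T z‖ := by
  by_contra! hlt
  have hfin : κ (T z) ≠ ⊤ := by
    have h0 := (hT z).1 0
    have h1 : κ (T z) ≤ polarObj κ z (T z) := le_max_left _ _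
    have h2 : polarObj κ z 0 < ⊤ := by simp [polarObj, hκ.map_zero]
    exact ((h1.trans h0).trans_lt h2).ne
  set k := (κ (T z)).toReal with hk
  have hkk : κ (T z) = ENNReal.ofReal k := (ENNReal.ofReal_toReal hfin).symm
  rw [hkk] at hlt
  have hkpos : 0 < k := (ENNReal.ofReal_pos.1 (bot_le.trans_lt hlt))
  have hrk : ‖z - T z‖ < k := (ENNReal.ofReal_lt_ofReal_iff hkpos).1 hlt
  -- The contraction factor `1 - t` must keep `‖z - T z‖ + t * ‖T z‖ < k`.
  obtain ⟨t, ht0, ht1, htk⟩ : ∃ t : ℝ, 0 < t ∧ t ≤ 1 ∧ ‖z - T z‖ + t * ‖T z‖ < k := by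
    have hN : 0 < ‖T z‖ + 1 := by positivity
    refine ⟨min 1 ((k - ‖z - T z‖) / (‖T z‖ + 1)), ?_, min_le_left _ _, ?_⟩
    · exact lt_min one_pos (div_pos (by linarith) hN)
    · have ht : 0 < min 1 ((k - ‖z - T z‖) / (‖T z‖ + 1)) :=
        lt_min one_pos (div_pos (by linarith) hN)
      have := (le_div_iff₀ hN).1 (min_le_right 1 ((k - ‖z - T z‖) / (‖T z‖ + 1)))
      nlinarith
  have hobj := (hT z).1 ((1 - t) • T z)
  have h1 : κ (T z) ≤ polarObj κ z (T z) := le_max_left _ _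
  refine absurd (h1.trans hobj) (not_le.2 (max_lt ?_ ?_))
  · rw [hκ.2.2 _ (by linarith), hkk, ← ENNReal.ofReal_mul (by linarith)]
    exact (ENNReal.ofReal_lt_ofReal_iff hkpos).2 (by nlinarith)
  · rw [hkk]
    refine (ENNReal.ofReal_lt_ofReal_iff hkpos).2 (lt_of_le_of_lt ?_ htk)
    have he : z - (1 - t) • T z = (z - T z) + t • T z := by module
    rw [he]
    refine (norm_add_le _ _).trans ?_
    rw [norm_smul, Real.norm_of_nonneg ht0.le]

/-- The obtuse angle inequality: `T z` is the projection of `z` onto `{κ ≤ ‖z - T z‖}`. -/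
lemma inner_prox_nonpos {κ : WithLp 2 (X × ℝ) → ℝ≥0∞} (hκ : IsClosedGauge κ)
    {T : WithLp 2 (X × ℝ) → WithLp 2 (X × ℝ)} (hT : IsPolarProx κ T) (z : WithLp 2 (X × ℝ))
    {u : WithLp 2 (X × ℝ)} (hu : κ u ≤ ENNReal.ofReal ‖z - T z‖) :
    ⟪z - T z, u - T z⟫ ≤ 0 := by
  set K : Set (WithLp 2 (X × ℝ)) := {v | κ v ≤ ENNReal.ofReal ‖z - T z‖} with hK
  have hconv : Convex ℝ K := by
    intro v hv w hw a b ha hb hab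
    calc κ (a • v + b • w) ≤ ENNReal.ofReal a * κ v + ENNReal.ofReal b * κ w :=
          hκ.2.1 v w a b ha hb hab
      _ ≤ ENNReal.ofReal a * ENNReal.ofReal ‖z - T z‖
            + ENNReal.ofReal b * ENNReal.ofReal ‖z - T z‖ := by gcongr; exacts [hv, hw]
      _ = ENNReal.ofReal ‖z - T z‖ := by
          rw [← add_mul, ← ENNReal.ofReal_add ha hb, hab, ENNReal.ofReal_one, one_mul]
  have hmem : T z ∈ K := gauge_prox_le hκ hT z
  have hmin : ∀ v ∈ K, ‖z - T z‖ ≤ ‖z - v‖ := by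
    intro v hv
    by_contra! hlt
    have hpos : 0 < ‖z - T z‖ := (norm_nonneg _).trans_lt hlt
    -- If `v` were closer to `z`, a slight contraction of `v` would still be closer and would have
    -- gauge value `< ‖z - T z‖`, hence a lower objective than `T z`.
    obtain ⟨t, ht0, ht1, htk⟩ :
        ∃ t : ℝ, 0 < t ∧ t ≤ 1 ∧ ‖z - v‖ + t * ‖v‖ < ‖z - T z‖ := by
      have hN : 0 < ‖v‖ + 1 := by positivity
      have ht : 0 < min 1 ((‖z - T z‖ - ‖z - v‖) / (‖v‖ + 1)) :=
        lt_min one_pos (div_pos (by linarith) hN)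
      refine ⟨_, ht, min_le_left _ _, ?_⟩
      have := (le_div_iff₀ hN).1 (min_le_right 1 ((‖z - T z‖ - ‖z - v‖) / (‖v‖ + 1)))
      nlinarith
    have h1 : ENNReal.ofReal ‖z - T z‖ ≤ polarObj κ z (T z) := le_max_right _ _
    refine absurd (h1.trans ((hT z).1 ((1 - t) • v))) (not_le.2 (max_lt ?_ ?_))
    · rw [hκ.2.2 _ (by linarith)]
      refine lt_of_le_of_lt (mul_le_mul_right hv _) ?_
      rw [← ENNReal.ofReal_mul (by linarith)]
      exact (ENNReal.ofReal_lt_ofReal_iff hpos).2 (by nlinarith)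
    · refine (ENNReal.ofReal_lt_ofReal_iff hpos).2 (lt_of_le_of_lt ?_ htk)
      have he : z - (1 - t) • v = (z - v) + t • v := by module
      rw [he]
      refine (norm_add_le _ _).trans ?_
      rw [norm_smul, Real.norm_of_nonneg ht0.le]
  have hinf : ‖z - T z‖ = ⨅ w : K, ‖z - w‖ := by
    have : Nonempty K := ⟨⟨T z, hmem⟩⟩
    refine le_antisymm (le_ciInf fun w => hmin w w.2) ?_
    exact ciInf_le ⟨0, by rintro _ ⟨w, rfl⟩; exact norm_nonneg _⟩ (⟨T z, hmem⟩ : K)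
  exact (norm_eq_iInf_iff_real_inner_le_zero hconv hmem).1 hinf u hu

/-- A fixed point of `P_S ∘ T` minimizes the residual `‖T y - y‖` over `S`, and every other minimizer
is again a fixed point. -/
lemma residual_eq_and_fixed {κ : WithLp 2 (X × ℝ) → ℝ≥0∞} (hκ : IsClosedGauge κ)
    {T : WithLp 2 (X × ℝ) → WithLp 2 (X × ℝ)} (hT : IsPolarProx κ T)
    {x y : WithLp 2 (X × ℝ)} (hx : PS (T x) = x) (hy : sndE y = 1)
    (hle : ‖y - T y‖ ≤ ‖x - T x‖) :
    ‖y - T y‖ = ‖x - T x‖ ∧ PS (T y) = y := by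
  have hx1 : fstE x = fstE (T x) := by rw [← fstE_PS (T x), hx]
  have hx2 : sndE x = 1 := by rw [← hx, sndE_PS]
  have hr : ‖x - T x‖ ^ 2 = (1 - sndE (T x)) ^ 2 := by
    rw [norm_sq_eq_fstE_sndE, fstE_sub, sndE_sub, hx1, hx2]; simp
  have hs : ‖y - T y‖ ^ 2 = ‖fstE y - fstE (T y)‖ ^ 2 + (1 - sndE (T y)) ^ 2 := by
    rw [norm_sq_eq_fstE_sndE, fstE_sub, sndE_sub, hy]
  -- Only heights enter the obtuse angle inequality at `x`, since `x - T x` is vertical.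
  have hvert : ∀ u, κ u ≤ ENNReal.ofReal ‖x - T x‖ →
      (1 - sndE (T x)) * (sndE u - sndE (T x)) ≤ 0 := by
    intro u hu
    have h := inner_prox_nonpos hκ hT x hu
    rw [inner_eq_fstE_sndE, fstE_sub, hx1, sndE_sub, sndE_sub, hx2] at h
    simpa using h
  have hv0 := hvert 0 (by simp [hκ.map_zero])
  have hz : sndE (0 : WithLp 2 (X × ℝ)) = 0 := rfl
  rw [hz] at hv0
  have hvb := hvert (T y) ((gauge_prox_le hκ hT y).trans (ENNReal.ofReal_le_ofReal hle))
  have hsq : ‖y - T y‖ ^ 2 ≤ ‖x - T x‖ ^ 2 := by gcongr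
  -- If `T x` has height `< 1` then `T y` is no higher; height `1` means zero residual at `x`, and
  -- height `> 1` is excluded by testing at the origin.
  have hheight : (1 - sndE (T x)) ^ 2 ≤ (1 - sndE (T y)) ^ 2 := by
    generalize sndE (T x) = α at *
    generalize sndE (T y) = β at *
    rcases lt_trichotomy α 1 with h | h | h
    · have : β ≤ α := by
        by_contra! hc
        nlinarith [mul_pos (sub_pos.2 h) (sub_pos.2 hc)]
      nlinarith
    · subst h; nlinarith [sq_nonneg (1 - β)]
    · nlinarith [mul_pos (sub_pos.2 h) (one_pos.trans h)]
  have hdist : ‖fstE y - fstE (T y)‖ ^ 2 = 0 :=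
    le_antisymm (by linarith) (sq_nonneg _)
  refine ⟨?_, ?_⟩
  · refine le_antisymm hle ?_
    exact (sq_le_sq₀ (norm_nonneg _) (norm_nonneg _)).1 (by linarith [sq_nonneg ‖fstE y - fstE (T y)‖])
  · refine eq_of_fstE_sndE ?_ ?_
    · rw [fstE_PS]
      exact (sub_eq_zero.1 (norm_eq_zero.1 (pow_eq_zero_iff two_ne_zero |>.1 hdist))).symm
    · rw [sndE_PS, hy]

lemma residual_le {κ : WithLp 2 (X × ℝ) → ℝ≥0∞} (hκ : IsClosedGauge κ)
    {T : WithLp 2 (X × ℝ) → WithLp 2 (X × ℝ)} (hT : IsPolarProx κ T)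
    {x y : WithLp 2 (X × ℝ)} (hx : PS (T x) = x) (hy : sndE y = 1) :
    ‖x - T x‖ ≤ ‖y - T y‖ := by
  rcases le_total ‖x - T x‖ ‖y - T y‖ with h | h
  · exact h
  · exact (residual_eq_and_fixed hκ hT hx hy h).1.ge

/-- The quasi-Fejér estimate: Pythagoras' inequality for the projection of `y` onto
`{κ ≤ ‖y - T y‖}`, tested at the point `T x` of that set. -/
lemma norm_sq_PS_prox_sub_le {κ : WithLp 2 (X × ℝ) → ℝ≥0∞} (hκ : IsClosedGauge κ)
    {T : WithLp 2 (X × ℝ) → WithLp 2 (X × ℝ)} (hT : IsPolarProx κ T)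
    {x y : WithLp 2 (X × ℝ)} (hx : PS (T x) = x) (hy : sndE y = 1) :
    ‖PS (T y) - x‖ ^ 2 ≤ ‖y - x‖ ^ 2 - (‖T y - y‖ ^ 2 - ‖T x - x‖ ^ 2) := by
  have hx1 : fstE x = fstE (T x) := by rw [← fstE_PS (T x), hx]
  have hx2 : sndE x = 1 := by rw [← hx, sndE_PS]
  have hin := inner_prox_nonpos hκ hT y
    ((gauge_prox_le hκ hT x).trans (ENNReal.ofReal_le_ofReal (residual_le hκ hT hx hy)))
  have hexp : ‖y - T x‖ ^ 2
      = ‖y - T y‖ ^ 2 - 2 * ⟪y - T y, T x - T y⟫ + ‖T x - T y‖ ^ 2 := by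
    rw [← norm_sub_sq_real]; congr 2; abel
  have h1 : ‖y - T x‖ ^ 2 = ‖y - x‖ ^ 2 + ‖T x - x‖ ^ 2 := by
    simp only [norm_sq_eq_fstE_sndE, fstE_sub, sndE_sub, hx1, hx2, hy, sub_self, norm_zero]
    ring
  have h2 : ‖PS (T y) - x‖ ^ 2 ≤ ‖T x - T y‖ ^ 2 := by
    simp only [norm_sq_eq_fstE_sndE, fstE_sub, sndE_sub, fstE_PS, sndE_PS, hx1, hx2, sub_self]
    rw [norm_sub_rev]
    nlinarith [sq_nonneg (sndE (T x) - sndE (T y))]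
  rw [norm_sub_rev (T y) y]
  linarith

/-- If `Fix (P_S ∘ T) ≠ ∅`, then for all `x ∈ Fix (P_S ∘ T)` and
`y ∈ S`, `‖P_S(T y) − x‖² ≤ ‖y − x‖² − (‖T y − y‖² − ‖T x − x‖²)`; in particular
`P_S ∘ T` is strictly quasinonexpansive on `S`, and the iteration
`y_{n+1} = P_S (T y_n)` is Fejér monotone with respect to `Fix (P_S ∘ T)`. -/
theorem PS_comp_polarProx_strictlyQuasinonexpansive
    (κ : WithLp 2 (X × ℝ) → ℝ≥0∞) (hκ : IsClosedGauge κ)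
    (T : WithLp 2 (X × ℝ) → WithLp 2 (X × ℝ)) (hT : IsPolarProx κ T)
    (hne : ∃ z, PS (T z) = z) :
    (∀ x : WithLp 2 (X × ℝ), PS (T x) = x → ∀ y : WithLp 2 (X × ℝ), sndE y = 1 →
      ‖PS (T y) - x‖ ^ 2 ≤ ‖y - x‖ ^ 2 - (‖T y - y‖ ^ 2 - ‖T x - x‖ ^ 2)) ∧
    (∀ y : WithLp 2 (X × ℝ), sndE y = 1 → PS (T y) ≠ y →
      ∀ x : WithLp 2 (X × ℝ), PS (T x) = x → ‖PS (T y) - x‖ < ‖y - x‖) ∧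
    (∀ y : ℕ → WithLp 2 (X × ℝ), sndE (y 0) = 1 →
      (∀ n, y (n + 1) = PS (T (y n))) →
      ∀ x : WithLp 2 (X × ℝ), PS (T x) = x → ∀ n, ‖y (n + 1) - x‖ ≤ ‖y n - x‖) := by
  have hstep : ∀ x : WithLp 2 (X × ℝ), PS (T x) = x → ∀ y : WithLp 2 (X × ℝ), sndE y = 1 →
      ‖PS (T y) - x‖ ≤ ‖y - x‖ := by
    intro x hx y hy
    have h := norm_sq_PS_prox_sub_le hκ hT hx hy
    have hr := residual_le hκ hT hx hy
    rw [norm_sub_rev (T y), norm_sub_rev (T x)] at h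
    have hr2 : ‖x - T x‖ ^ 2 ≤ ‖y - T y‖ ^ 2 := by gcongr
    exact (sq_le_sq₀ (norm_nonneg _) (norm_nonneg _)).1 (by linarith)
  refine ⟨fun x hx y hy => norm_sq_PS_prox_sub_le hκ hT hx hy, ?_, ?_⟩
  · intro y hy hny x hx
    have h := norm_sq_PS_prox_sub_le hκ hT hx hy
    have hr : ‖x - T x‖ < ‖y - T y‖ := by
      by_contra! hle
      exact hny (residual_eq_and_fixed hκ hT hx hy hle).2
    rw [norm_sub_rev (T y), norm_sub_rev (T x)] at h
    have hr2 : ‖x - T x‖ ^ 2 < ‖y - T y‖ ^ 2 := by gcongr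
    exact (sq_lt_sq₀ (norm_nonneg _) (norm_nonneg _)).1 (by linarith)
  · intro y hy0 hrec x hx n
    have hy : sndE (y n) = 1 := by
      cases n with
      | zero => exact hy0
      | succ m => rw [hrec m, sndE_PS]
    rw [hrec n]
    exact hstep x hx (y n) hy
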